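/- For every g ∈ G, the determinant of (the matrix underlying) g satisfies det(g)^r = 1. -/

import Mathlib

open Matrix in
lemma weil_sq {r : ℕ} [Fact (Nat.Prime r)] {𝔽 : Type*} [Field 𝔽] {θ : 𝔽}
    (hθ : IsPrimitiveRoot θ r) (Cb : Matrix (ZMod r) (ZMod r) 𝔽)
    (hCb : ∀ i j : ZMod r, Cb i j = θ ^ (i * j).val) :
    Cb * Cb = (r : 𝔽) • (Equiv.neg (ZMod r)).permMatrix 𝔽 := by
  have hp := AddChar.zmodChar_primitive_of_primitive_root r hθ
  ext i j
  have key := AddChar.sum_mulShift (i + j) hp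
  rw [Matrix.mul_apply, Matrix.smul_apply]
  have h1 : ∀ k, Cb i k * Cb k j = AddChar.zmodChar r hθ.pow_eq_one (k * (i + j)) := by
    intro k
    rw [hCb, hCb, mul_add, AddChar.map_add_eq_mul, AddChar.zmodChar_apply, AddChar.zmodChar_apply,
      mul_comm k i]
  rw [Finset.sum_congr rfl fun k _ => h1 k, key, ZMod.card]
  have h2 : (-i = j) ↔ i + j = 0 := by
    constructor
    · rintro rfl; ring
    · intro h; exact neg_eq_of_add_eq_zero_right h
  by_cases h : i + j = 0
  · simp [Equiv.Perm.permMatrix, PEquiv.toMatrix_apply, h, h2.2 h]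
  · have h3 : ¬ (-i = j) := fun hh => h (h2.1 hh)
    simp [Equiv.Perm.permMatrix, PEquiv.toMatrix_apply, h, h3]

lemma weil_sign {r : ℕ} [Fact (Nat.Prime r)] (hr : Odd r) :
    Equiv.Perm.sign (Equiv.neg (ZMod r)) = (-1) ^ ((r - 1) / 2) := by
  rw [Equiv.Perm.sign_of_pow_two_eq_one, ZMod.card]
  · congr 3
    rw [Fintype.card_eq_one_iff]
    refine ⟨⟨0, neg_zero⟩, ?_⟩
    rintro ⟨y, hy⟩
    rw [Function.mem_fixedPoints_iff] at hy
    have : -y = y := hy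
    ext
    exact (ZMod.neg_eq_self_iff y).1 this |>.resolve_right (by
      intro h; rcases hr with ⟨k, hk⟩; omega)
  · ext x; simp [pow_two]

lemma weil_det {r : ℕ} [Fact (Nat.Prime r)] (hr : Odd r) {𝔽 : Type*} [Field 𝔽] {θ : 𝔽}
    (hθ : IsPrimitiveRoot θ r) (Cb : Matrix (ZMod r) (ZMod r) 𝔽)
    (hCb : ∀ i j : ZMod r, Cb i j = θ ^ (i * j).val)
    (lam : 𝔽) (hlam : lam = (-(r : 𝔽)) ^ ((r - 1) / 2) * Cb.det⁻¹) :
    (lam • Cb).det = 1 := by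
  have hsq := congrArg Matrix.det (weil_sq hθ Cb hCb)
  rw [Matrix.det_mul, Matrix.det_smul, Matrix.det_permutation, weil_sign hr, ZMod.card] at hsq
  rw [Matrix.det_smul, ZMod.card, hlam]
  have hr0 : (r : 𝔽) ≠ 0 := (hθ.neZero').ne
  obtain ⟨k, hk⟩ := hr
  have hh : (r - 1) / 2 = k := by omega
  rw [hh] at hsq ⊢
  push_cast at hsq
  generalize Cb.det = d at *
  generalize (r : 𝔽) = x at *
  have hd : d ≠ 0 := by
    rintro rfl
    have : x ^ r * (-1) ^ k ≠ 0 := mul_ne_zero (pow_ne_zero _ hr0) (pow_ne_zero _ (by simp))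
    exact this (by rw [← hsq]; simp)
  have hdr : d ^ r = (d * d) ^ k * d := by rw [hk]; ring
  rw [mul_pow, inv_pow, hdr, hsq]
  have hs : ((-1 : 𝔽) ^ k) ≠ 0 := pow_ne_zero _ (by simp)
  have e : ((-x) ^ k) ^ r = (x ^ r * (-1) ^ k) ^ k := by
    have h1 : ((-1 : 𝔽) ^ k) ^ r = ((-1) ^ k) ^ k := by
      rw [← pow_mul, ← pow_mul]
      have : Even (k * k + k) := by rw [← Nat.mul_succ]; exact Nat.even_mul_succ_self k
      have h2 : k * r = 2 * (k * k) + k := by rw [hk]; ring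
      rw [h2, pow_add, pow_mul]
      simp only [even_two, Even.neg_pow, one_pow, one_mul]
      rcases Nat.even_or_odd k with h | h
      · rw [h.neg_one_pow, (h.mul_right k).neg_one_pow]
      · rw [h.neg_one_pow, (h.mul h).neg_one_pow]
    rw [neg_pow, mul_pow, h1, mul_pow, ← pow_mul, ← pow_mul x, mul_comm k r, mul_comm, pow_mul x]
  rw [e]
  have : (x ^ r * (-1) ^ k) ^ k ≠ 0 := pow_ne_zero _ (mul_ne_zero (pow_ne_zero _ hr0) hs)
  field_simp

/-- Every element of `G` has determinant an `r`-th root of unity. -/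
theorem weil_detG_pow_r
    {r : ℕ} [Fact (Nat.Prime r)] (hr : Odd r)
    {𝔽 : Type*} [Field 𝔽] {θ : 𝔽} (hθ : IsPrimitiveRoot θ r)
    {ℓ : ℕ} (hℓ : 1 ≤ ℓ)
    (Cb : Matrix (ZMod r) (ZMod r) 𝔽)
    (hCb : ∀ i j : ZMod r, Cb i j = θ ^ (i * j).val)
    (lam : 𝔽) (hlam : lam = (-(r : 𝔽)) ^ ((r - 1) / 2) * Cb.det⁻¹)
    (uC uU : Fin ℓ → (Matrix (Fin ℓ → ZMod r) (Fin ℓ → ZMod r) 𝔽)ˣ)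
    (uD : Fin ℓ → Fin ℓ → (Matrix (Fin ℓ → ZMod r) (Fin ℓ → ZMod r) 𝔽)ˣ)
    (huC : ∀ t, (uC t : Matrix (Fin ℓ → ZMod r) (Fin ℓ → ZMod r) 𝔽)
      = lam • Matrix.of fun η ξ =>
          if ∀ i, i ≠ t → η i = ξ i then θ ^ (η t * ξ t).val else 0)
    (huU : ∀ t, (uU t : Matrix (Fin ℓ → ZMod r) (Fin ℓ → ZMod r) 𝔽)
      = Matrix.diagonal fun ξ => θ ^ ((ξ t).val * ((ξ t).val + r) / 2))
    (huD : ∀ s t : Fin ℓ, s < t →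
      (uD s t : Matrix (Fin ℓ → ZMod r) (Fin ℓ → ZMod r) 𝔽)
        = Matrix.diagonal fun ξ => θ ^ (ξ s * ξ t).val)
    (G : Subgroup (Matrix (Fin ℓ → ZMod r) (Fin ℓ → ZMod r) 𝔽)ˣ)
    (hG : G = Subgroup.closure (Set.range uC ∪ Set.range uU ∪
      {x | ∃ s t : Fin ℓ, s < t ∧ x = uD s t})) :
    ∀ g ∈ G, ((g : Matrix (Fin ℓ → ZMod r) (Fin ℓ → ZMod r) 𝔽).det) ^ r = 1 := by
  have hdiag : ∀ f : (Fin ℓ → ZMod r) → ℕ,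
      (Matrix.diagonal fun ξ => θ ^ f ξ).det ^ r = 1 := by
    intro f
    rw [Matrix.det_diagonal, ← Finset.prod_pow]
    apply Finset.prod_eq_one
    intro ξ _
    rw [← pow_mul, mul_comm, pow_mul, hθ.pow_eq_one, one_pow]
  subst hG
  intro g hg
  induction hg using Subgroup.closure_induction with
  | mem x hx =>
    rcases hx with (⟨t, rfl⟩ | ⟨t, rfl⟩) | ⟨s, t, hst, rfl⟩
    · have hb : (uC t : Matrix (Fin ℓ → ZMod r) (Fin ℓ → ZMod r) 𝔽)
          = (Matrix.blockDiagonal (fun _ : {j // j ≠ t} → ZMod r => lam • Cb)).submatrix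
            (Equiv.funSplitAt t (ZMod r)) (Equiv.funSplitAt t (ZMod r)) := by
        rw [huC]
        ext η ξ
        have hiff : (∀ i, i ≠ t → η i = ξ i) ↔
            (fun j : {j // j ≠ t} => η j) = (fun j : {j // j ≠ t} => ξ j) := by
          rw [funext_iff]; simp
        simp only [Matrix.smul_apply, Matrix.of_apply, Matrix.submatrix_apply,
          Matrix.blockDiagonal_apply, Equiv.funSplitAt_apply, hCb, hiff]
        split_ifs <;> simp
      rw [hb, Matrix.det_submatrix_equiv_self, Matrix.det_blockDiagonal]
      simp only [weil_det hr hθ Cb hCb lam hlam]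
      simp
    · rw [huU]; exact hdiag _
    · rw [huD s t hst]; exact hdiag _
  | one => simp
  | mul x y _ _ hx hy => rw [Units.val_mul, Matrix.det_mul, mul_pow, hx, hy, one_mul]
  | inv x _ hx =>
    have h : ((x * x⁻¹ : (Matrix (Fin ℓ → ZMod r) (Fin ℓ → ZMod r) 𝔽)ˣ) :
      Matrix (Fin ℓ → ZMod r) (Fin ℓ → ZMod r) 𝔽).det ^ r = 1 := by simp
    rwa [Units.val_mul, Matrix.det_mul, mul_pow, hx, one_mul] at h
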